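/- arXiv:2209.09977 — 4 statements merged into one kernel-verified Lean document; each statement's English description precedes it below -/
import Mathlib

section
/- Let n ≥ 1, M ≥ 1, let μ̂⁽¹⁾, …, μ̂⁽ᴹ⁾ ∈ ℝⁿ, and let Σ̂⁽¹⁾, …, Σ̂⁽ᴹ⁾ be n×n positive semidefinite matrices. Define μ̄ = (1/M) Σₘ μ̂⁽ᵐ⁾ and Σ* = (1/M) Σₘ [Σ̂⁽ᵐ⁾ + (μ̂⁽ᵐ⁾ − μ̄)(μ̂⁽ᵐ⁾ − μ̄)ᵀ], and assume Σ* is positive definite. Then the function L₁(μ₀, Σ₀) = M·log det(2π Σ₀) + tr( Σ₀⁻¹ Σₘ [Σ̂⁽ᵐ⁾ + (μ̂⁽ᵐ⁾ − μ₀)(μ̂⁽ᵐ⁾ − μ₀)ᵀ] ), defined for μ₀ ∈ ℝⁿ and Σ₀ positive definite, attains its global minimum at (μ₀, Σ₀) = (μ̄, Σ*). -/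
open Matrix

theorem aux_log_det {n : ℕ} {A : Matrix (Fin n) (Fin n) ℝ} (hA : A.PosDef) :
    Real.log A.det ≤ A.trace - n := by
  have hd := hA.isHermitian.det_eq_prod_eigenvalues
  have ht := hA.isHermitian.trace_eq_sum_eigenvalues
  simp only [RCLike.ofReal_real_eq_id, id_eq] at hd ht
  rw [hd, ht, Real.log_prod (fun i _ => (hA.eigenvalues_pos i).ne')]
  have h : ∀ i ∈ Finset.univ, Real.log (hA.isHermitian.eigenvalues i) ≤
      hA.isHermitian.eigenvalues i - 1 :=
    fun i _ => Real.log_le_sub_one_of_pos (hA.eigenvalues_pos i)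
  have := Finset.sum_le_sum h
  simpa [Finset.sum_sub_distrib] using this

open scoped MatrixOrder in
theorem aux_log_det_two {n : ℕ} {P S : Matrix (Fin n) (Fin n) ℝ} (hP : P.PosDef)
    (hS : S.PosDef) : Real.log P.det + Real.log S.det ≤ (P * S).trace - n := by
  have hPd := hP.det_pos
  have hSd := hS.det_pos
  obtain ⟨B, hB⟩ := CStarAlgebra.nonneg_iff_eq_star_mul_self.mp hP.posSemidef.nonneg
  rw [star_eq_conjTranspose] at hB
  have hC : (B * S * Bᴴ).PosSemidef := hS.posSemidef.mul_mul_conjTranspose_same B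
  have hdet : (B * S * Bᴴ).det = P.det * S.det := by
    rw [hB]; simp only [det_mul]; ring
  have htr : (B * S * Bᴴ).trace = (P * S).trace := by
    rw [hB, trace_mul_comm, Matrix.mul_assoc]
  have hC' : (B * S * Bᴴ).PosDef := by
    rw [hC.posDef_iff_det_ne_zero, hdet]; positivity
  have := aux_log_det hC'
  rwa [hdet, htr, Real.log_mul hPd.ne' hSd.ne'] at this

theorem aux_sum {n M : ℕ} (hM : 1 ≤ M)
    (μhat : Fin M → (Fin n → ℝ)) (Shat : Fin M → Matrix (Fin n) (Fin n) ℝ)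
    (μbar : Fin n → ℝ) (hμbar : μbar = (M : ℝ)⁻¹ • ∑ m, μhat m) (μ₀ : Fin n → ℝ) :
    ∑ m, (Shat m + Matrix.vecMulVec (μhat m - μ₀) (μhat m - μ₀)) =
      ∑ m, (Shat m + Matrix.vecMulVec (μhat m - μbar) (μhat m - μbar)) +
        (M : ℝ) • Matrix.vecMulVec (μbar - μ₀) (μbar - μ₀) := by
  have hM' : (M : ℝ) ≠ 0 := by positivity
  have hs : ∀ i, ∑ m, (μhat m i - μbar i) = 0 := by
    intro i
    rw [Finset.sum_sub_distrib, hμbar]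
    simp [Finset.sum_apply]
    field_simp
    simp
  ext i j
  simp only [Matrix.sum_apply, Matrix.add_apply, Matrix.smul_apply, Matrix.vecMulVec_apply,
    Pi.sub_apply, smul_eq_mul]
  have : ∀ m, Shat m i j + (μhat m i - μ₀ i) * (μhat m j - μ₀ j) =
      (Shat m i j + (μhat m i - μbar i) * (μhat m j - μbar j)) +
      (μhat m i - μbar i) * (μbar j - μ₀ j) + (μbar i - μ₀ i) * (μhat m j - μbar j)
      + (μbar i - μ₀ i) * (μbar j - μ₀ j) := fun m => by ring
  simp only [this]
  rw [Finset.sum_add_distrib, Finset.sum_add_distrib, Finset.sum_add_distrib, ← Finset.sum_mul,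
    ← Finset.mul_sum, hs, hs]
  simp

/-- Theorem 3.1, initial-condition part: the loss
`L₁(μ₀, S₀) = M·log det(2π S₀) + tr(S₀⁻¹ Σₘ [Σ̂⁽ᵐ⁾ + (μ̂⁽ᵐ⁾ − μ₀)(μ̂⁽ᵐ⁾ − μ₀)ᵀ])`
attains its global minimum at the empirical mean `μ̄` and covariance `Σ*`. -/
theorem mstep_initial_condition_optimum (n M : ℕ) (hn : 1 ≤ n) (hM : 1 ≤ M)
    (μhat : Fin M → (Fin n → ℝ)) (Shat : Fin M → Matrix (Fin n) (Fin n) ℝ)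
    (hShat : ∀ m, (Shat m).PosSemidef)
    (μbar : Fin n → ℝ) (hμbar : μbar = (M : ℝ)⁻¹ • ∑ m, μhat m)
    (Sstar : Matrix (Fin n) (Fin n) ℝ)
    (hSstar : Sstar =
      (M : ℝ)⁻¹ • ∑ m, (Shat m + Matrix.vecMulVec (μhat m - μbar) (μhat m - μbar)))
    (hpd : Sstar.PosDef) :
    ∀ (μ₀ : Fin n → ℝ) (S₀ : Matrix (Fin n) (Fin n) ℝ), S₀.PosDef →
      (M : ℝ) * Real.log (((2 * Real.pi) • Sstar).det) +
          (Sstar⁻¹ *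
            ∑ m, (Shat m + Matrix.vecMulVec (μhat m - μbar) (μhat m - μbar))).trace ≤
        (M : ℝ) * Real.log (((2 * Real.pi) • S₀).det) +
          (S₀⁻¹ *
            ∑ m, (Shat m + Matrix.vecMulVec (μhat m - μ₀) (μhat m - μ₀))).trace := by
  intro μ₀ S₀ hS₀
  have hM0 : (0 : ℝ) < M := by positivity
  have hT : ∑ m, (Shat m + Matrix.vecMulVec (μhat m - μbar) (μhat m - μbar)) =
      (M : ℝ) • Sstar := by
    rw [hSstar, smul_smul, mul_inv_cancel₀ hM0.ne', one_smul]
  rw [aux_sum hM μhat Shat μbar hμbar μ₀, hT]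
  have hd1 := hpd.det_pos
  have hd2 := hS₀.det_pos
  have h1 : (Sstar⁻¹ * (M : ℝ) • Sstar).trace = M * n := by
    rw [Matrix.mul_smul, Matrix.nonsing_inv_mul _ (isUnit_iff_ne_zero.mpr hd1.ne')]
    simp
  have h2 : (S₀⁻¹ * ((M : ℝ) • Sstar + (M : ℝ) • vecMulVec (μbar - μ₀) (μbar - μ₀))).trace =
      M * ((S₀⁻¹ * Sstar).trace + (μbar - μ₀) ⬝ᵥ (S₀⁻¹ *ᵥ (μbar - μ₀))) := by
    rw [← smul_add, Matrix.mul_smul, Matrix.mul_add, trace_smul, trace_add, mul_vecMulVec,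
      trace_vecMulVec, dotProduct_comm, smul_eq_mul]
  have h3 : 0 ≤ (μbar - μ₀) ⬝ᵥ (S₀⁻¹ *ᵥ (μbar - μ₀)) := by
    simpa using hS₀.inv.posSemidef.dotProduct_mulVec_nonneg (μbar - μ₀)
  have h4 := aux_log_det_two hS₀.inv hpd
  have h5 : Real.log (S₀⁻¹).det = - Real.log S₀.det := by
    rw [Matrix.det_nonsing_inv, Ring.inverse_eq_inv', Real.log_inv]
  have hc : ((2 * Real.pi) ^ n) ≠ 0 := by positivity
  rw [h1, h2, det_smul, det_smul, Fintype.card_fin, Real.log_mul hc hd1.ne',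
    Real.log_mul hc hd2.ne', ← mul_add, ← mul_add]
  apply mul_le_mul_of_nonneg_left _ hM0.le
  linarith
end

section
/- Let p, N ≥ 1, M ≥ 1, L ≥ 0. For m = 1,…,M and l = 0,…,L let y_l⁽ᵐ⁾ ∈ ℝᵖ, μ̂_l⁽ᵐ⁾ ∈ ℝᴺ, and let Σ̂_l⁽ᵐ⁾ be N×N positive semidefinite matrices, and let C̃ ∈ ℝ^{p×N} be a fixed matrix. Define c₀* = (1/(M(L+1))) Σₘ Σₗ (y_l⁽ᵐ⁾ − C̃ μ̂_l⁽ᵐ⁾) and Σᵥ* = (1/(M(L+1))) Σₘ Σₗ [ C̃ Σ̂_l⁽ᵐ⁾ C̃ᵀ + (y_l⁽ᵐ⁾ − c₀* − C̃ μ̂_l⁽ᵐ⁾)(y_l⁽ᵐ⁾ − c₀* − C̃ μ̂_l⁽ᵐ⁾)ᵀ ], and assume Σᵥ* is positive definite. Then the function L₂(c₀, Σᵥ) = M(L+1)·log det(2π Σᵥ) + tr( Σᵥ⁻¹ Σₘ Σₗ [ C̃ Σ̂_l⁽ᵐ⁾ C̃ᵀ + (y_l⁽ᵐ⁾ − c₀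 − C̃ μ̂_l⁽ᵐ⁾)(y_l⁽ᵐ⁾ − c₀ − C̃ μ̂_l⁽ᵐ⁾)ᵀ ] ), defined for c₀ ∈ ℝᵖ and Σᵥ positive definite, attains its global minimum at (c₀, Σᵥ) = (c₀*, Σᵥ*). -/
open Matrix

open scoped MatrixOrder Matrix.Norms.L2Operator in
lemma aux_logdet {p : ℕ} (A B : Matrix (Fin p) (Fin p) ℝ) (hA : A.PosDef) (hB : B.PosDef) :
    Real.log A.det + p ≤ Real.log B.det + (B⁻¹ * A).trace := by
  obtain ⟨P, hP⟩ := (CStarAlgebra.nonneg_iff_eq_star_mul_self).1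
    (Matrix.nonneg_iff_posSemidef.2 hB.inv.posSemidef)
  rw [Matrix.star_eq_conjTranspose] at hP
  have hdet : B.det⁻¹ = P.det * P.det := by
    have := congrArg Matrix.det hP
    rwa [Matrix.det_nonsing_inv, Ring.inverse_eq_inv', Matrix.det_mul, Matrix.det_conjTranspose,
      star_trivial] at this
  have hBpos := hB.det_pos
  have hApos := hA.det_pos
  have hD0 : (P * A * Pᴴ).PosSemidef := hA.posSemidef.mul_mul_conjTranspose_same P
  have hDdet : (P * A * Pᴴ).det = A.det / B.det := by
    rw [Matrix.det_mul, Matrix.det_mul, Matrix.det_conjTranspose, star_trivial, div_eq_mul_inv,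
      hdet]
    ring
  have hDtr : (P * A * Pᴴ).trace = (B⁻¹ * A).trace := by
    rw [hP, Matrix.trace_mul_comm, ← Matrix.mul_assoc]
  have hpos : 0 < (P * A * Pᴴ).det := by rw [hDdet]; positivity
  have e1 := hD0.1.det_eq_prod_eigenvalues
  have e2 := hD0.1.trace_eq_sum_eigenvalues
  simp only [RCLike.ofReal_real_eq_id, id] at e1 e2
  have hne : ∀ i ∈ Finset.univ, hD0.1.eigenvalues i ≠ 0 := by
    rw [← Finset.prod_ne_zero_iff, ← e1]; exact hpos.ne'
  have h1 : Real.log (P * A * Pᴴ).det ≤ (P * A * Pᴴ).trace - p := by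
    rw [e1, e2, Real.log_prod hne]
    calc _ ≤ ∑ i, (hD0.1.eigenvalues i - 1) := by
          refine Finset.sum_le_sum fun i hi => Real.log_le_sub_one_of_pos ?_
          exact lt_of_le_of_ne (hD0.eigenvalues_nonneg i) (hne i hi).symm
      _ = _ := by simp
  rw [hDdet, hDtr, Real.log_div hApos.ne' hBpos.ne'] at h1
  linarith

lemma aux_sum_s3 {p M L : ℕ} (Q : Fin M → Fin (L + 1) → Matrix (Fin p) (Fin p) ℝ)
    (u : Fin M → Fin (L + 1) → Fin p → ℝ) (hu : ∑ m, ∑ l, u m l = 0) (d : Fin p → ℝ) :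
    ∑ m, ∑ l, (Q m l + Matrix.vecMulVec (u m l + d) (u m l + d)) =
      ∑ m, ∑ l, (Q m l + Matrix.vecMulVec (u m l) (u m l)) +
        ((M : ℝ) * (L + 1)) • Matrix.vecMulVec d d := by
  have hu' : ∀ i, ∑ m, ∑ l, u m l i = 0 := fun i => by
    have := congrFun hu i
    simpa [Finset.sum_apply] using this
  ext i j
  have : ∀ m l, (Q m l + Matrix.vecMulVec (u m l + d) (u m l + d)) i j =
      (Q m l + Matrix.vecMulVec (u m l) (u m l)) i j + (u m l i * d j + u m l j * d i + d i * d j) := by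
    intro m l
    simp only [Matrix.add_apply, Matrix.vecMulVec_apply, Pi.add_apply]
    ring
  rw [Matrix.add_apply, Matrix.smul_apply, Matrix.vecMulVec_apply]
  simp only [Matrix.sum_apply, this]
  have e : ∀ i j, ∑ m, ∑ l, u m l i * d j = 0 := fun i j => by
    simp only [← Finset.sum_mul, hu', zero_mul]
  simp only [Finset.sum_add_distrib (g := fun _ => (_ + _ : ℝ))]
  rw [Finset.sum_add_distrib]
  congr 1
  simp only [Finset.sum_add_distrib, e]
  simp
  ring

/-- Theorem 3.1, observation-map part: with the output matrix `C̃` fixed, the loss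
`L₂(c₀, Σᵥ)` attains its global minimum at the stated `c₀*` and `Σᵥ*`. -/
theorem mstep_observation_map_optimum (p N M L : ℕ) (hp : 1 ≤ p) (hN : 1 ≤ N) (hM : 1 ≤ M)
    (y : Fin M → Fin (L + 1) → Fin p → ℝ)
    (μhat : Fin M → Fin (L + 1) → Fin N → ℝ)
    (Shat : Fin M → Fin (L + 1) → Matrix (Fin N) (Fin N) ℝ)
    (hShat : ∀ m l, (Shat m l).PosSemidef)
    (Ct : Matrix (Fin p) (Fin N) ℝ)
    (c0star : Fin p → ℝ)
    (hc0star : c0star =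
      ((M : ℝ) * (L + 1))⁻¹ • ∑ m, ∑ l, (y m l - Ct.mulVec (μhat m l)))
    (Svstar : Matrix (Fin p) (Fin p) ℝ)
    (hSvstar : Svstar =
      ((M : ℝ) * (L + 1))⁻¹ •
        ∑ m, ∑ l,
          (Ct * Shat m l * Ctᵀ +
            Matrix.vecMulVec (y m l - c0star - Ct.mulVec (μhat m l))
              (y m l - c0star - Ct.mulVec (μhat m l))))
    (hpd : Svstar.PosDef) :
    ∀ (c0 : Fin p → ℝ) (Sv : Matrix (Fin p) (Fin p) ℝ), Sv.PosDef →
      (M : ℝ) * (L + 1) * Real.log (((2 * Real.pi) • Svstar).det) +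
          (Svstar⁻¹ *
            ∑ m, ∑ l,
              (Ct * Shat m l * Ctᵀ +
                Matrix.vecMulVec (y m l - c0star - Ct.mulVec (μhat m l))
                  (y m l - c0star - Ct.mulVec (μhat m l)))).trace ≤
        (M : ℝ) * (L + 1) * Real.log (((2 * Real.pi) • Sv).det) +
          (Sv⁻¹ *
            ∑ m, ∑ l,
              (Ct * Shat m l * Ctᵀ +
                Matrix.vecMulVec (y m l - c0 - Ct.mulVec (μhat m l))
                  (y m l - c0 - Ct.mulVec (μhat m l)))).trace := by
  intro c0 Sv hSv
  have hK : (0 : ℝ) < (M : ℝ) * (L + 1) := by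
    have : (0 : ℝ) < M := by exact_mod_cast hM
    positivity
  have hu : ∑ m, ∑ l, (y m l - c0star - Ct.mulVec (μhat m l)) = 0 := by
    have h1 : ∀ m l, y m l - c0star - Ct.mulVec (μhat m l) =
      (y m l - Ct.mulVec (μhat m l)) - c0star := fun m l => by abel
    have h2 : ∑ m, ∑ l, (y m l - Ct.mulVec (μhat m l)) = ((M : ℝ) * (L + 1)) • c0star := by
      rw [hc0star, smul_smul, mul_inv_cancel₀ hK.ne', one_smul]
    simp only [h1]
    have h4 : ∀ f : Fin M → Fin (L + 1) → Fin p → ℝ, ∑ m, ∑ l, (f m l - c0star) =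
        ∑ m, ∑ l, f m l - ((M : ℝ) * (L + 1)) • c0star := by
      intro f
      ext i
      simp [Finset.sum_sub_distrib]
      ring
    rw [h4, h2, sub_self]
  have hS := aux_sum_s3 (fun m l => Ct * Shat m l * Ctᵀ) _ hu (c0star - c0)
  have h3 : ∀ m l, y m l - c0star - Ct.mulVec (μhat m l) + (c0star - c0) =
      y m l - c0 - Ct.mulVec (μhat m l) := fun m l => by abel
  simp only [h3] at hS
  have hT : ∑ m, ∑ l,
          (Ct * Shat m l * Ctᵀ +
            Matrix.vecMulVec (y m l - c0star - Ct.mulVec (μhat m l))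
              (y m l - c0star - Ct.mulVec (μhat m l))) = ((M : ℝ) * (L + 1)) • Svstar := by
    rw [hSvstar, smul_smul, mul_inv_cancel₀ hK.ne', one_smul]
  rw [hS, hT]
  have hpi : (0 : ℝ) < (2 * Real.pi) ^ p := by positivity
  have key := aux_logdet Svstar Sv hpd hSv
  have hq : 0 ≤ (Sv⁻¹ * Matrix.vecMulVec (c0star - c0) (c0star - c0)).trace := by
    have := hSv.inv.posSemidef.dotProduct_mulVec_nonneg (c0star - c0)
    rw [Matrix.mul_vecMulVec, Matrix.trace_vecMulVec, dotProduct_comm]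
    simpa using this
  have hinv : Svstar⁻¹ * Svstar = 1 :=
    Matrix.nonsing_inv_mul _ (isUnit_iff_ne_zero.2 hpd.det_pos.ne')
  simp only [Matrix.mul_add, Matrix.mul_smul, Matrix.trace_add, Matrix.trace_smul, hinv,
    Matrix.trace_one, Matrix.det_smul, Fintype.card_fin, smul_eq_mul]
  rw [Real.log_mul hpi.ne' hpd.det_pos.ne', Real.log_mul hpi.ne' hSv.det_pos.ne']
  have a1 := mul_le_mul_of_nonneg_left key hK.le
  have a2 := mul_nonneg hK.le hq
  linarith
end

section
/- Let n ≥ 1, ML ≥ 1, and suppose the n×n matrix-valued function 𝒫' ↦ W(𝒫') on a parameter set is positive definite for every 𝒫'. If (Σ_w, 𝒫') minimizes (Σ, 𝒫') ↦ ML·log det(2π Σ) + tr(Σ⁻¹ W(𝒫')) over positive definite Σ and parameters 𝒫', then Σ_w = (1/(ML)) W(𝒫'), and 𝒫' minimizes 𝒫' ↦ log det W(𝒫'). -/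
open Matrix

open scoped MatrixOrder in
lemma aux_one {n : ℕ} (A : Matrix (Fin n) (Fin n) ℝ) (hA : A.PosDef)
    (h : A.trace - n ≤ Real.log A.det) : A = 1 := by
  have hpos := hA.eigenvalues_pos
  have ht : A.trace = ∑ i, hA.1.eigenvalues i := by
    simpa using hA.1.trace_eq_sum_eigenvalues
  have hd : A.det = ∏ i, hA.1.eigenvalues i := by
    simpa using hA.1.det_eq_prod_eigenvalues
  rw [ht, hd, Real.log_prod (fun i _ => (hpos i).ne')] at h
  have h1 : ∀ i, hA.1.eigenvalues i = 1 := by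
    by_contra! hc
    obtain ⟨i, hi⟩ := hc
    have : ∑ i, Real.log (hA.1.eigenvalues i) < ∑ i, (hA.1.eigenvalues i - 1) :=
      Finset.sum_lt_sum (fun j _ => Real.log_le_sub_one_of_pos (hpos j))
        ⟨i, Finset.mem_univ _, Real.log_lt_sub_one_of_pos (hpos i) hi⟩
    simp [Finset.sum_sub_distrib] at this
    linarith
  have h2 : (RCLike.ofReal ∘ hA.1.eigenvalues : Fin n → ℝ) = fun _ => 1 := by
    funext i; simp [h1 i]
  have h3 := hA.1.spectral_theorem
  rw [h2, diagonal_one, map_one] at h3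
  exact h3

open scoped MatrixOrder in
lemma aux_two {n : ℕ} (S V : Matrix (Fin n) (Fin n) ℝ) (hS : S.PosDef) (hV : V.PosDef)
    (h : (S⁻¹ * V).trace - n ≤ Real.log V.det - Real.log S.det) : S = V := by
  obtain ⟨B, hB⟩ := CStarAlgebra.nonneg_iff_eq_star_mul_self.mp hS.inv.posSemidef.nonneg
  rw [star_eq_conjTranspose] at hB
  have hdet : S⁻¹.det = Bᴴ.det * B.det := by rw [hB, det_mul]
  have hne : Bᴴ.det * B.det ≠ 0 := hdet ▸ hS.inv.det_pos.ne'
  have hBu : IsUnit B := (isUnit_iff_isUnit_det B).2 (isUnit_iff_ne_zero.2 (right_ne_zero_of_mul hne))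
  have hA : (B * V * Bᴴ).PosDef :=
    hV.mul_mul_conjTranspose_same (Matrix.vecMul_injective_iff_isUnit.2 hBu)
  have hi : S⁻¹.det = (S.det)⁻¹ := by rw [det_nonsing_inv, Ring.inverse_eq_inv']
  have h1 : B * V * Bᴴ = 1 := by
    apply aux_one _ hA
    have e1 : (B * V * Bᴴ).trace = (S⁻¹ * V).trace := by
      rw [hB, trace_mul_comm, mul_assoc]
    have e2 : (B * V * Bᴴ).det = V.det * (S.det)⁻¹ := by
      rw [← hi, hdet, det_mul, det_mul]; ring
    rw [e1, e2, Real.log_mul hV.det_pos.ne' (inv_ne_zero hS.det_pos.ne'), Real.log_inv]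
    linarith
  have h2 : V * S⁻¹ = 1 := by
    have : (V * Bᴴ) * B = 1 := mul_eq_one_comm.1 (by rw [← mul_assoc]; exact h1)
    rw [hB, ← mul_assoc, this]
  calc S = (V * S⁻¹) * S := by rw [h2, one_mul]
    _ = V := nonsing_inv_mul_cancel_right _ _ (isUnit_iff_ne_zero.2 hS.det_pos.ne')

lemma aux_log {n : ℕ} (c : ℝ) (hc : 0 < c) (S : Matrix (Fin n) (Fin n) ℝ) (hS : S.PosDef) :
    Real.log (c • S).det = n * Real.log c + Real.log S.det := by
  rw [det_smul, Real.log_mul (by positivity) hS.det_pos.ne', Real.log_pow, Fintype.card_fin]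

lemma aux_tr {n : ℕ} (c : ℝ) (hc : 0 < c) (S : Matrix (Fin n) (Fin n) ℝ) (hS : S.PosDef) :
    ((c⁻¹ • S)⁻¹ * S).trace = c * n := by
  have hu : IsUnit S.det := isUnit_iff_ne_zero.2 hS.det_pos.ne'
  have : (c⁻¹ • S)⁻¹ = c • S⁻¹ := by
    apply inv_eq_left_inv
    rw [smul_mul_smul_comm, mul_inv_cancel₀ hc.ne', nonsing_inv_mul _ hu, one_smul]
  rw [this, smul_mul_assoc, nonsing_inv_mul _ hu, trace_smul, trace_one, Fintype.card_fin,
    smul_eq_mul]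

/-- Lemma A.2 (full statement): if `(Σ_w, 𝒫')` minimizes
`(Σ, 𝒫') ↦ ML·log det(2πΣ) + tr(Σ⁻¹ W(𝒫'))` over positive definite `Σ` and
parameters `𝒫'`, where `W(𝒫')` is always positive definite, then
`Σ_w = (1/(ML)) W(𝒫')` and `𝒫'` minimizes `log det W(𝒫')`. -/
theorem mstep_lemma_full (n ML : ℕ) (hn : 1 ≤ n) (hML : 1 ≤ ML)
    {P : Type*} [Nonempty P]
    (W : P → Matrix (Fin n) (Fin n) ℝ) (hW : ∀ p, (W p).PosDef)
    (Sw : Matrix (Fin n) (Fin n) ℝ) (hSw : Sw.PosDef) (p₀ : P)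
    (hmin : ∀ S : Matrix (Fin n) (Fin n) ℝ, S.PosDef → ∀ p : P,
      (ML : ℝ) * Real.log (((2 * Real.pi) • Sw).det) + (Sw⁻¹ * W p₀).trace ≤
        (ML : ℝ) * Real.log (((2 * Real.pi) • S).det) + (S⁻¹ * W p).trace) :
    Sw = ((ML : ℝ))⁻¹ • W p₀ ∧ ∀ p : P, Real.log (W p₀).det ≤ Real.log (W p).det := by
  have hm : (0 : ℝ) < ML := by exact_mod_cast hML
  have hpi : (0 : ℝ) < 2 * Real.pi := by positivity
  have hV : ∀ p, ((ML : ℝ)⁻¹ • W p).PosDef := fun p => (hW p).smul (inv_pos.2 hm)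
  have key : Sw = ((ML : ℝ))⁻¹ • W p₀ := by
    apply aux_two _ _ hSw (hV p₀)
    have h := hmin _ (hV p₀) p₀
    rw [aux_tr _ hm _ (hW p₀), aux_log _ hpi _ hSw, aux_log _ hpi _ (hV p₀)] at h
    rw [mul_smul_comm, trace_smul, smul_eq_mul]
    refine le_of_mul_le_mul_left ?_ hm
    rw [mul_sub, mul_inv_cancel_left₀ hm.ne']
    linarith
  refine ⟨key, fun p => ?_⟩
  have h := hmin _ (hV p) p
  rw [key, aux_tr _ hm _ (hW p₀), aux_tr _ hm _ (hW p), aux_log _ hpi _ (hV p),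
    aux_log _ hpi _ (hV p₀), aux_log _ (inv_pos.2 hm) _ (hW p),
    aux_log _ (inv_pos.2 hm) _ (hW p₀)] at h
  refine le_of_mul_le_mul_left ?_ hm
  linarith
end

section
/- Let α, β ∈ ℝ, let u : ℝ → ℝ, and let x₁, x₂ : ℝ → ℝ be differentiable functions satisfying x₁'(t) = −α x₁(t) + u(t) and x₂'(t) = β( x₁(t)³ − x₂(t) ) for all t. Then the ℝ⁵-valued function Z(t) = (1, x₁(t), x₂(t), x₁(t)², x₁(t)³) satisfies, for all t, Z'(t) = M Z(t) + u(t) N Z(t), where M is the 5×5 matrix with rows (0,0,0,0,0), (0,−α,0,0,0), (0,0,−β,0,β), (0,0,0,−2α,0), (0,0,0,0,−3α), and N is the 5×5 matrix with rows (0,0,0,0,0), (1,0,0,0,0), (0,0,0,0,0), (0,2,0,0,0), (0,0,0,3,0). -/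
open Matrix

/-- The actuated slow-manifold system `ẋ₁ = −αx₁ + u`, `ẋ₂ = β(x₁³ − x₂)` is exactly
bilinear on the lifted state `Z = (1, x₁, x₂, x₁², x₁³)`: `Ż = M Z + u N Z`. -/
theorem slow_manifold_bilinear_lift (α β : ℝ) (u : ℝ → ℝ) (x₁ x₂ : ℝ → ℝ)
    (hx₁ : ∀ t : ℝ, HasDerivAt x₁ (-α * x₁ t + u t) t)
    (hx₂ : ∀ t : ℝ, HasDerivAt x₂ (β * ((x₁ t) ^ 3 - x₂ t)) t)
    (M N : Matrix (Fin 5) (Fin 5) ℝ)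
    (hM : M = !![0, 0, 0, 0, 0;
                 0, -α, 0, 0, 0;
                 0, 0, -β, 0, β;
                 0, 0, 0, -2 * α, 0;
                 0, 0, 0, 0, -3 * α])
    (hN : N = !![0, 0, 0, 0, 0;
                 1, 0, 0, 0, 0;
                 0, 0, 0, 0, 0;
                 0, 2, 0, 0, 0;
                 0, 0, 0, 3, 0]) :
    ∀ t : ℝ, HasDerivAt
      (fun s => (![1, x₁ s, x₂ s, (x₁ s) ^ 2, (x₁ s) ^ 3] : Fin 5 → ℝ))
      (M.mulVec ![1, x₁ t, x₂ t, (x₁ t) ^ 2, (x₁ t) ^ 3] +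
        u t • N.mulVec ![1, x₁ t, x₂ t, (x₁ t) ^ 2, (x₁ t) ^ 3]) t := by
  intro t
  have key : HasDerivAt
      (fun s => (![1, x₁ s, x₂ s, (x₁ s) ^ 2, (x₁ s) ^ 3] : Fin 5 → ℝ))
      ![0, -α * x₁ t + u t, β * ((x₁ t) ^ 3 - x₂ t),
        2 * x₁ t * (-α * x₁ t + u t), 3 * (x₁ t) ^ 2 * (-α * x₁ t + u t)] t := by
    rw [hasDerivAt_pi]
    intro i
    fin_cases i
    · exact hasDerivAt_const t (1 : ℝ)
    · exact hx₁ t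
    · exact hx₂ t
    · simpa using (hx₁ t).fun_pow 2
    · simpa using (hx₁ t).fun_pow 3
  convert key using 1
  subst hM hN
  ext i
  fin_cases i <;> simp [Matrix.mulVec, dotProduct, Fin.sum_univ_succ] <;> ring
end
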